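/- Hölder bound for low-frequency projections (Lemma 2.2, estimate (2.4)). Let α ∈ [0,1), D ≥ 1, R ≥ 10, and let N ≥ 1 be dyadic. There exists a constant C = C(α,D) such that for every measurable φ : ℝ → ℂ with ‖⟨x⟩^{-D} φ‖_{L¹(ℝ)} < ∞, one has ‖P_{≤N} φ‖_{C^α([-R,R])} ≤ C ( N^α ‖φ‖_{C⁰([-2R,2R])} + (RN)^{-D} ‖⟨x⟩^{-D} φ‖_{L¹(ℝ)} ). -/

import Mathlib

open MeasureTheory Real Set ENNReal

noncomputable section

/-- The Japanese bracket `⟨x⟩ = √(1 + x²)`. -/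
def jap (x : ℝ) : ℝ := Real.sqrt (1 + x ^ 2)

/-- The inverse Fourier transform `ǧ(x) = (2π)^{-1/2} ∫ g(ξ) e^{i x ξ} dξ`. -/
def invFourier (g : ℝ → ℝ) (x : ℝ) : ℂ :=
  (Real.sqrt (2 * Real.pi) : ℂ)⁻¹ * ∫ ξ : ℝ, (g ξ : ℂ) * Complex.exp (Complex.I * ((x * ξ : ℝ) : ℂ))

/-- `ρ` is an admissible Littlewood–Paley bump function: smooth, `[0,1]`-valued, equal to `1`
on `[-1,1]` and vanishing outside of `[-9/8, 9/8]`. -/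
def IsLPBump (ρ : ℝ → ℝ) : Prop :=
  ContDiff ℝ (⊤ : ℕ∞) ρ ∧ (∀ ξ, ρ ξ ∈ Set.Icc (0 : ℝ) 1) ∧
    (∀ ξ ∈ Set.Icc (-1 : ℝ) 1, ρ ξ = 1) ∧
    ∀ ξ, ξ ∉ Set.Icc (-(9/8) : ℝ) (9/8) → ρ ξ = 0

/-- The symbol `ρ_{≤N}(ξ) = ρ(ξ/N)`. -/
def rhoLE (ρ : ℝ → ℝ) (N : ℝ) (ξ : ℝ) : ℝ := ρ (ξ / N)

open scoped Classical in
/-- The symbol `ρ_N`: `ρ_1 = ρ_{≤1}` and `ρ_N = ρ_{≤N} - ρ_{≤N/2}` for dyadic `N ≥ 2`. -/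
def rhoD (ρ : ℝ → ℝ) (N : ℝ) (ξ : ℝ) : ℝ :=
  if N = 1 then ρ ξ else ρ (ξ / N) - ρ (2 * ξ / N)

/-- The Littlewood–Paley projection `P_{≤N} φ = ρ̌_{≤N} ∗ φ`. -/
def PLE (ρ : ℝ → ℝ) (N : ℝ) (φ : ℝ → ℂ) (x : ℝ) : ℂ :=
  ∫ y : ℝ, invFourier (rhoLE ρ N) y * φ (x - y)

/-- The Littlewood–Paley projection `P_N φ = ρ̌_N ∗ φ`. -/
def PD (ρ : ℝ → ℝ) (N : ℝ) (φ : ℝ → ℂ) (x : ℝ) : ℂ :=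
  ∫ y : ℝ, invFourier (rhoD ρ N) y * φ (x - y)

/-- The weighted norm `‖⟨x⟩^{-D} φ‖_{L¹(ℝ)}`. -/
def wL1 (D : ℝ) (φ : ℝ → ℂ) : ℝ := ∫ x : ℝ, jap x ^ (-D) * ‖φ x‖

/-- The `ℝ≥0∞`-valued sup-norm `‖φ‖_{C⁰(I)}`. -/
def supNormE (I : Set ℝ) (φ : ℝ → ℂ) : ℝ≥0∞ := ⨆ x ∈ I, (‖φ x‖₊ : ℝ≥0∞)

/-- The `ℝ≥0∞`-valued Hölder seminorm on `I`. -/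
def holderSemiE (α : ℝ) (I : Set ℝ) (φ : ℝ → ℂ) : ℝ≥0∞ :=
  ⨆ x ∈ I, ⨆ y ∈ I, ⨆ _ : x ≠ y, ⨆ _ : |x - y| ≤ 1,
    ENNReal.ofReal (‖φ x - φ y‖ / |x - y| ^ α)

open scoped Classical in
/-- The `ℝ≥0∞`-valued Hölder norm `‖φ‖_{C^α(I)}`; for `α = 0` it is the sup-norm. -/
def holderNormE (α : ℝ) (I : Set ℝ) (φ : ℝ → ℂ) : ℝ≥0∞ :=
  if α = 0 then supNormE I φ else supNormE I φ + holderSemiE α I φ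

/-
The kernel of `P_{≤N}` is `K_N(y) = N K(N y)` for the Schwartz function `K = ρ̌`. Since `K` and
`K'` are `O(⟨u⟩^{-s})` for every `s`, both `‖P_{≤N} φ(x)‖` and the Hölder quotient of `P_{≤N} φ`, up
to a factor `N^α`, are controlled by the averages `∫ N ⟨N(x - z)⟩^{-s} ‖φ z‖ dz`. For `|x| ≤ R` the
part `|z| ≤ 2R` of such an average is at most `π ‖φ‖_{C⁰([-2R,2R])}`. For `|z| > 2R` the bracket
`⟨N(x - z)⟩` dominates each of `N`, `RN` and `⟨z⟩ / 4`; taking `s = 2|D| + 2`, two powers of it turn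
the prefactor `N` into `N⁻¹`, which absorbs `N^α`, and the others produce `(RN)^{-D} ⟨z⟩^{-D}`.
-/

open scoped SchwartzMap FourierTransform

lemma one_le_jap (x : ℝ) : 1 ≤ jap x :=
  one_le_sqrt.2 (by linarith [sq_nonneg x])

lemma jap_pos (x : ℝ) : 0 < jap x :=
  one_pos.trans_le (one_le_jap x)

lemma continuous_jap : Continuous jap := by
  unfold jap
  fun_prop

lemma continuous_jap_rpow (s : ℝ) : Continuous (jap · ^ s) :=
  continuous_jap.rpow_const fun x => .inl (jap_pos x).ne'

lemma abs_le_jap (x : ℝ) : |x| ≤ jap x :=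
  abs_le_sqrt (by linarith)

lemma jap_le_one_add_abs (x : ℝ) : jap x ≤ 1 + |x| := by
  simpa [jap] using sqrt_one_add_norm_sq_le x

lemma jap_rpow_neg_two (x : ℝ) : jap x ^ (-2 : ℝ) = (1 + x ^ 2)⁻¹ := by
  rw [rpow_neg (jap_pos x).le, Real.rpow_two, jap, sq_sqrt (by positivity)]

lemma jap_le_two_mul_jap {x y : ℝ} (h : |x - y| ≤ 1) : jap y ≤ 2 * jap x := by
  rw [jap, sqrt_le_left (by linarith [jap_pos x]), mul_pow, jap, sq_sqrt (by positivity)]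
  have : (x - y) ^ 2 ≤ 1 := (sq_le_one_iff_abs_le_one _).2 h
  nlinarith [sq_nonneg (2 * x - y)]

lemma mul_half_abs_le_jap_mul_sub {N x z : ℝ} (hN : 0 ≤ N) (h : 2 * |x| ≤ |z|) :
    N * (|z| / 2) ≤ jap (N * (x - z)) := calc
  N * (|z| / 2) ≤ N * |x - z| := by
    gcongr
    linarith [abs_sub_abs_le_abs_sub z x, abs_sub_comm x z]
  _ = |N * (x - z)| := by rw [abs_mul, abs_of_nonneg hN]
  _ ≤ jap (N * (x - z)) := abs_le_jap _

lemma jap_rpow_neg_le_two_rpow_mul {s x y : ℝ} (hs : 0 ≤ s) (h : |x - y| ≤ 1) :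
    jap x ^ (-s) ≤ 2 ^ s * jap y ^ (-s) := by
  have hxy : jap y ^ s ≤ 2 ^ s * jap x ^ s := by
    rw [← mul_rpow zero_le_two (jap_pos x).le]
    exact rpow_le_rpow (jap_pos y).le (jap_le_two_mul_jap h) hs
  have hx := rpow_pos_of_pos (jap_pos x) s
  have hy := rpow_pos_of_pos (jap_pos y) s
  rwa [rpow_neg (jap_pos x).le, rpow_neg (jap_pos y).le, ← div_eq_mul_inv, inv_eq_one_div,
    div_le_div_iff₀ hx hy, one_mul]

lemma rpow_neg_abs_le_rpow_neg {a b : ℝ} (ha : 1 ≤ a) (hab : a ≤ b) (D : ℝ) :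
    b ^ (-|D|) ≤ a ^ (-D) :=
  (rpow_le_rpow_of_nonpos (by linarith) hab (by linarith [abs_nonneg D])).trans
    (rpow_le_rpow_of_exponent_le ha (neg_le_neg (le_abs_self D)))

section Decay

variable {F : Type*} [NormedAddCommGroup F] [NormedSpace ℝ F]

lemma exists_norm_schwartzMap_le_jap_rpow_neg (f : 𝓢(ℝ, F)) (s : ℝ) :
    ∃ B, 0 < B ∧ ∀ x, ‖f x‖ ≤ B * jap x ^ (-s) := by
  obtain ⟨m, hm⟩ := exists_nat_ge s
  set B := 2 ^ m * (Finset.Iic (m, 0)).sup (fun i => SchwartzMap.seminorm ℝ i.1 i.2) f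
  refine ⟨|B| + 1, by positivity, fun x => ?_⟩
  rw [rpow_neg (jap_pos x).le, ← div_eq_mul_inv, le_div_iff₀' (rpow_pos_of_pos (jap_pos x) s)]
  have hjap : jap x ^ s ≤ (1 + |x|) ^ m := calc
    jap x ^ s ≤ jap x ^ (m : ℝ) := rpow_le_rpow_of_exponent_le (one_le_jap x) hm
    _ = jap x ^ m := rpow_natCast _ _
    _ ≤ (1 + |x|) ^ m := pow_le_pow_left₀ (jap_pos x).le (jap_le_one_add_abs x) m
  calc jap x ^ s * ‖f x‖ ≤ (1 + |x|) ^ m * ‖f x‖ := by gcongr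
    _ ≤ B := by
      simpa using SchwartzMap.one_add_le_sup_seminorm_apply (𝕜 := ℝ) (m := (m, 0)) (k := m)
        le_rfl le_rfl f x
    _ ≤ |B| + 1 := by linarith [le_abs_self B]

lemma exists_norm_schwartzMap_and_deriv_le_jap_rpow_neg (f : 𝓢(ℝ, F)) (s : ℝ) :
    ∃ B, 0 < B ∧ (∀ x, ‖f x‖ ≤ B * jap x ^ (-s)) ∧ ∀ x, ‖deriv f x‖ ≤ B * jap x ^ (-s) := by
  obtain ⟨B₀, hB₀, hf⟩ := exists_norm_schwartzMap_le_jap_rpow_neg f s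
  obtain ⟨B₁, -, hf'⟩ := exists_norm_schwartzMap_le_jap_rpow_neg (SchwartzMap.derivCLM ℝ F f) s
  have hjap (x : ℝ) : 0 ≤ jap x ^ (-s) := rpow_nonneg (jap_pos x).le _
  refine ⟨max B₀ B₁, hB₀.trans_le (le_max_left _ _), fun x => (hf x).trans ?_,
    fun x => (hf' x).trans ?_⟩
  · exact mul_le_mul_of_nonneg_right (le_max_left _ _) (hjap x)
  · exact mul_le_mul_of_nonneg_right (le_max_right _ _) (hjap x)

lemma norm_sub_le_abs_sub_rpow_mul_jap {f : ℝ → F} (hf : Differentiable ℝ f) {s B α : ℝ}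
    (hs : 0 ≤ s) (hb : ∀ x, ‖f x‖ ≤ B * jap x ^ (-s)) (hb' : ∀ x, ‖deriv f x‖ ≤ B * jap x ^ (-s))
    (hα0 : 0 ≤ α) (hα1 : α ≤ 1) (x y : ℝ) :
    ‖f x - f y‖ ≤ 2 ^ s * B * |x - y| ^ α * (jap x ^ (-s) + jap y ^ (-s)) := by
  have hx := rpow_pos_of_pos (jap_pos x) (-s)
  have hy := rpow_pos_of_pos (jap_pos y) (-s)
  have hB : 0 ≤ B := nonneg_of_mul_nonneg_left ((norm_nonneg _).trans (hb x)) hx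
  rcases le_total 1 |x - y| with h | h
  · have hone : 1 ≤ 2 ^ s * |x - y| ^ α :=
      one_le_mul_of_one_le_of_one_le (one_le_rpow one_le_two hs) (one_le_rpow h hα0)
    calc ‖f x - f y‖ ≤ ‖f x‖ + ‖f y‖ := norm_sub_le _ _
      _ ≤ 1 * (B * (jap x ^ (-s) + jap y ^ (-s))) := by linarith [hb x, hb y]
      _ ≤ (2 ^ s * |x - y| ^ α) * (B * (jap x ^ (-s) + jap y ^ (-s))) := by gcongr
      _ = _ := by ring
  · have hderiv : ∀ u ∈ uIcc x y, ‖deriv f u‖ ≤ B * (2 ^ s * jap x ^ (-s)) := fun u hu =>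
      (hb' u).trans (mul_le_mul_of_nonneg_left (jap_rpow_neg_le_two_rpow_mul hs
        ((abs_sub_left_of_mem_uIcc hu).trans (by rwa [abs_sub_comm]))) hB)
    have hpow : |x - y| ≤ |x - y| ^ α := by
      simpa using rpow_le_rpow_of_exponent_ge_of_imp (abs_nonneg (x - y)) h hα1 (by simp)
    calc ‖f x - f y‖ ≤ (B * (2 ^ s * jap x ^ (-s))) * |x - y| :=
          (convex_uIcc x y).norm_image_sub_le_of_norm_deriv_le (fun u _ => hf u) hderiv
            right_mem_uIcc left_mem_uIcc
      _ ≤ (B * (2 ^ s * (jap x ^ (-s) + jap y ^ (-s)))) * |x - y| ^ α := by gcongr; linarith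
      _ = _ := by ring

end Decay

/-- The `L¹`-normalised dilate `y ↦ N f(N y)` of `f`. -/
def dilate {F : Type*} [NormedAddCommGroup F] [NormedSpace ℝ F] (N : ℝ) (f : ℝ → F) (y : ℝ) : F :=
  N • f (N * y)

section Dilate

variable {F : Type*} [NormedAddCommGroup F] [NormedSpace ℝ F] {f : ℝ → F} {w : ℝ → ℝ} {N : ℝ}

lemma continuous_dilate (hf : Continuous f) (N : ℝ) : Continuous (dilate N f) := by
  unfold dilate
  fun_prop

lemma integrable_dilate_sub_left (hf : Integrable f) (hN : N ≠ 0) (x : ℝ) :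
    Integrable fun z => dilate N f (x - z) :=
  ((hf.comp_mul_left' hN).comp_sub_left x).smul N

lemma integral_dilate_sub_left (f : ℝ → F) (hN : 0 < N) (x : ℝ) :
    ∫ z, dilate N f (x - z) = ∫ u, f u := by
  simp only [dilate]
  rw [integral_sub_left_eq_self (fun z => N • f (N * z)), integral_smul,
    Measure.integral_comp_mul_left, abs_of_pos (inv_pos.2 hN), smul_inv_smul₀ hN.ne']

lemma norm_dilate_le {B : ℝ} (hN : 0 ≤ N) (hf : ∀ u, ‖f u‖ ≤ B * w u) (y : ℝ) :
    ‖dilate N f y‖ ≤ B * dilate N w y := by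
  rw [dilate, dilate, norm_smul, norm_of_nonneg hN, smul_eq_mul, mul_left_comm]
  exact mul_le_mul_of_nonneg_left (hf _) hN

lemma norm_dilate_sub_dilate_le {A α : ℝ} (hN : 0 ≤ N)
    (hf : ∀ u v, ‖f u - f v‖ ≤ A * |u - v| ^ α * (w u + w v)) (y z : ℝ) :
    ‖dilate N f y - dilate N f z‖ ≤
      A * (N ^ α * |y - z| ^ α) * (dilate N w y + dilate N w z) := by
  have hyz : |N * y - N * z| ^ α = N ^ α * |y - z| ^ α := by
    rw [← mul_sub, abs_mul, abs_of_nonneg hN, mul_rpow hN (abs_nonneg _)]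
  have h := mul_le_mul_of_nonneg_left (hf (N * y) (N * z)) hN
  rw [hyz] at h
  simp only [dilate, smul_eq_mul]
  rw [← smul_sub, norm_smul, norm_of_nonneg hN]
  linarith

end Dilate

/-- The convolution `K_N ∗ φ` with the dilate `K_N` of a kernel `K`. It is both `P_{≤N}` (for
`K = ρ̌`) and, for real `K` and `φ`, the weighted average that dominates it. -/
def dilateConv {𝕜 : Type*} [RCLike 𝕜] (K : ℝ → 𝕜) (N : ℝ) (φ : ℝ → 𝕜) (x : ℝ) : 𝕜 :=
  ∫ z, dilate N K (x - z) * φ z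

section DilateConv

variable {𝕜 : Type*} [RCLike 𝕜] {K φ : ℝ → 𝕜} {w : ℝ → ℝ} {N x y : ℝ}

lemma aestronglyMeasurable_dilate_sub_left_mul (hK : Continuous K) (hφ : AEStronglyMeasurable φ)
    (N x : ℝ) : AEStronglyMeasurable fun z => dilate N K (x - z) * φ z :=
  ((continuous_dilate hK N).comp (by fun_prop)).aestronglyMeasurable.mul hφ

lemma norm_dilate_mul_le {B : ℝ} (hN : 0 ≤ N) (hb : ∀ u, ‖K u‖ ≤ B * w u) (z : ℝ) :
    ‖dilate N K (x - z) * φ z‖ ≤ B * (dilate N w (x - z) * ‖φ z‖) := by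
  rw [norm_mul, ← mul_assoc]
  exact mul_le_mul_of_nonneg_right (norm_dilate_le hN hb _) (norm_nonneg _)

lemma dilateConv_nonneg {ψ : ℝ → ℝ} (hN : 0 ≤ N) (hw : ∀ u, 0 ≤ w u) (hψ : ∀ z, 0 ≤ ψ z) (x : ℝ) :
    0 ≤ dilateConv w N ψ x :=
  integral_nonneg fun z => mul_nonneg (mul_nonneg hN (hw _)) (hψ z)

lemma norm_dilateConv_le {B : ℝ} (hN : 0 ≤ N) (hb : ∀ u, ‖K u‖ ≤ B * w u)
    (hw : Integrable fun z => dilate N w (x - z) * ‖φ z‖) :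
    ‖dilateConv K N φ x‖ ≤ B * dilateConv w N (‖φ ·‖) x :=
  (norm_integral_le_of_norm_le (hw.const_mul B) (.of_forall (norm_dilate_mul_le hN hb))).trans_eq
    (integral_const_mul _ _)

lemma norm_dilateConv_sub_le {A B α : ℝ} (hN : 0 ≤ N) (hK : Continuous K)
    (hφ : AEStronglyMeasurable φ) (hb : ∀ u, ‖K u‖ ≤ B * w u)
    (hb' : ∀ u v, ‖K u - K v‖ ≤ A * |u - v| ^ α * (w u + w v))
    (hwx : Integrable fun z => dilate N w (x - z) * ‖φ z‖)
    (hwy : Integrable fun z => dilate N w (y - z) * ‖φ z‖) :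
    ‖dilateConv K N φ x - dilateConv K N φ y‖ ≤
      A * (N ^ α * |x - y| ^ α) * (dilateConv w N (‖φ ·‖) x + dilateConv w N (‖φ ·‖) y) := by
  have hint {t : ℝ} (hw : Integrable fun z => dilate N w (t - z) * ‖φ z‖) :
      Integrable fun z => dilate N K (t - z) * φ z :=
    (hw.const_mul B).mono' (aestronglyMeasurable_dilate_sub_left_mul hK hφ N t)
      (.of_forall (norm_dilate_mul_le hN hb))
  have hpt (z : ℝ) : ‖dilate N K (x - z) * φ z - dilate N K (y - z) * φ z‖ ≤
      A * (N ^ α * |x - y| ^ α) * (dilate N w (x - z) * ‖φ z‖ + dilate N w (y - z) * ‖φ z‖) := by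
    have h := norm_dilate_sub_dilate_le hN hb' (x - z) (y - z)
    rw [sub_sub_sub_cancel_right] at h
    rw [← sub_mul, norm_mul, ← add_mul, ← mul_assoc]
    exact mul_le_mul_of_nonneg_right h (norm_nonneg _)
  rw [dilateConv, dilateConv, ← integral_sub (hint hwx) (hint hwy)]
  refine (norm_integral_le_of_norm_le ((hwx.add hwy).const_mul _) (.of_forall hpt)).trans_eq ?_
  rw [integral_const_mul]
  exact congrArg _ (integral_add hwx hwy)

end DilateConv

lemma invFourier_rhoLE (ρ : ℝ → ℝ) {N : ℝ} (hN : 0 < N) :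
    invFourier (rhoLE ρ N) = dilate N (invFourier ρ) := by
  ext y
  have hscale := Measure.integral_comp_div
    (fun ξ : ℝ => (ρ ξ : ℂ) * Complex.exp (Complex.I * ((N * y * ξ : ℝ) : ℂ))) N
  rw [abs_of_pos hN] at hscale
  simp only [dilate, invFourier, rhoLE]
  rw [← mul_smul_comm, ← hscale]
  congr! 6 with ξ
  field_simp

lemma PLE_eq_dilateConv (ρ : ℝ → ℝ) {N : ℝ} (hN : 0 < N) (φ : ℝ → ℂ) :
    PLE ρ N φ = dilateConv (invFourier ρ) N φ := by
  ext x
  rw [PLE, dilateConv, ← integral_sub_left_eq_self _ volume x, invFourier_rhoLE ρ hN]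
  simp only [_root_.sub_sub_cancel]

lemma invFourier_eq_fourierInv (g : ℝ → ℝ) (x : ℝ) :
    invFourier g x =
      (√(2 * π) : ℂ)⁻¹ * 𝓕⁻ (fun ξ => (g ξ : ℂ)) (x * (2 * π)⁻¹) := by
  rw [invFourier, Real.fourierInv_eq']
  congr! 3 with ξ
  rw [smul_eq_mul, mul_comm, RCLike.inner_apply, conj_trivial]
  congr 2
  push_cast
  field_simp

lemma exists_schwartzMap_eq_invFourier (g : 𝓢(ℝ, ℝ)) : ∃ K : 𝓢(ℝ, ℂ), ⇑K = invFourier g := by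
  let dilation : ℝ ≃L[ℝ] ℝ :=
    ContinuousLinearEquiv.unitsEquivAut ℝ (Units.mk0 (2 * π)⁻¹ (inv_pos.2 two_pi_pos).ne')
  refine ⟨(√(2 * π) : ℂ)⁻¹ • SchwartzMap.compCLMOfContinuousLinearEquiv ℂ dilation
    (𝓕⁻ (g.postcompCLM Complex.ofRealCLM)), funext fun x => ?_⟩
  rw [invFourier_eq_fourierInv, smul_apply, smul_eq_mul,
    SchwartzMap.compCLMOfContinuousLinearEquiv_apply, SchwartzMap.fourierInv_coe]
  rfl

section Majorant

variable {D R N x S : ℝ} {φ : ℝ → ℂ}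

lemma dilate_jap_le_of_two_mul_lt_abs {z : ℝ} (hR : 1 ≤ R) (hN : 1 ≤ N) (hx : |x| ≤ R)
    (hz : 2 * R < |z|) :
    dilate N (jap · ^ (-(2 * |D| + 2))) (x - z) ≤
      4 ^ |D| * N⁻¹ * (R * N) ^ (-D) * jap z ^ (-D) := by
  set J := jap (N * (x - z))
  have hN0 : 0 < N := by linarith
  have hJ0 : 0 < J := jap_pos _
  have hJ : N * (|z| / 2) ≤ J := mul_half_abs_le_jap_mul_sub hN0.le (by linarith)
  have hNJ : N ≤ J := by nlinarith
  have hRNJ : R * N ≤ J := by nlinarith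
  have hzJ : jap z ≤ 4 * J := by nlinarith [jap_le_one_add_abs z]
  have hNN : J ^ (-2 : ℝ) ≤ N ^ (-2 : ℝ) := rpow_le_rpow_of_nonpos hN0 hNJ (by norm_num)
  have hRN : J ^ (-|D|) ≤ (R * N) ^ (-D) :=
    rpow_neg_abs_le_rpow_neg (one_le_mul_of_one_le_of_one_le hR hN) hRNJ D
  have hfour : J ^ (-|D|) ≤ 4 ^ |D| * jap z ^ (-D) := calc
    J ^ (-|D|) = 4 ^ |D| * (4 * J) ^ (-|D|) := by
      rw [mul_rpow zero_le_four hJ0.le, rpow_neg zero_le_four, mul_inv_cancel_left₀ (by positivity)]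
    _ ≤ 4 ^ |D| * jap z ^ (-D) := by
      gcongr
      exact rpow_neg_abs_le_rpow_neg (one_le_jap z) hzJ D
  calc dilate N (jap · ^ (-(2 * |D| + 2))) (x - z)
      = N * (J ^ (-2 : ℝ) * (J ^ (-|D|) * J ^ (-|D|))) := by
        rw [dilate, smul_eq_mul, ← rpow_add hJ0, ← rpow_add hJ0]
        congr 2
        ring
    _ ≤ N * (N ^ (-2 : ℝ) * ((R * N) ^ (-D) * (4 ^ |D| * jap z ^ (-D)))) := by gcongr
    _ = _ := by
        rw [rpow_neg hN0.le, Real.rpow_two]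
        field_simp

lemma dilate_jap_mul_norm_le (hR : 1 ≤ R) (hN : 1 ≤ N) (hx : |x| ≤ R)
    (hS : ∀ z ∈ Icc (-(2 * R)) (2 * R), ‖φ z‖ ≤ S) (z : ℝ) :
    dilate N (jap · ^ (-(2 * |D| + 2))) (x - z) * ‖φ z‖ ≤
      S * dilate N (fun u => (1 + u ^ 2)⁻¹) (x - z) +
        4 ^ |D| * N⁻¹ * (R * N) ^ (-D) * (jap z ^ (-D) * ‖φ z‖) := by
  have hjap := jap_pos z
  have hS0 : 0 ≤ S := (norm_nonneg _).trans (hS 0 ⟨by linarith, by linarith⟩)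
  by_cases hz : z ∈ Icc (-(2 * R)) (2 * R)
  · refine le_add_of_le_of_nonneg ?_ (by positivity)
    rw [mul_comm]
    simp only [dilate, smul_eq_mul, ← jap_rpow_neg_two]
    have hweight : jap (N * (x - z)) ^ (-(2 * |D| + 2)) ≤ jap (N * (x - z)) ^ (-2 : ℝ) :=
      rpow_le_rpow_of_exponent_le (one_le_jap _) (by linarith [abs_nonneg D])
    gcongr
    · have := jap_pos (N * (x - z))
      positivity
    · exact hS z hz
  · refine le_add_of_nonneg_of_le (by simp only [dilate, smul_eq_mul]; positivity) ?_
    rw [mem_Icc, ← abs_le, not_le] at hz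
    rw [← mul_assoc]
    exact mul_le_mul_of_nonneg_right (dilate_jap_le_of_two_mul_lt_abs hR hN hx hz)
      (norm_nonneg _)

lemma integrable_dilate_jap_mul_norm (hR : 1 ≤ R) (hN : 1 ≤ N) (hx : |x| ≤ R)
    (hφ : AEStronglyMeasurable φ) (hint : Integrable fun z => jap z ^ (-D) * ‖φ z‖)
    (hS : ∀ z ∈ Icc (-(2 * R)) (2 * R), ‖φ z‖ ≤ S) :
    Integrable fun z => dilate N (jap · ^ (-(2 * |D| + 2))) (x - z) * ‖φ z‖ := by
  have hN0 : N ≠ 0 := by linarith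
  refine (((integrable_dilate_sub_left integrable_inv_one_add_sq hN0 x).const_mul S).add
    (hint.const_mul (4 ^ |D| * N⁻¹ * (R * N) ^ (-D)))).mono'
    (aestronglyMeasurable_dilate_sub_left_mul (continuous_jap_rpow _) hφ.norm N x)
    (.of_forall fun z => ?_)
  have := rpow_nonneg (jap_pos (N * (x - z))).le (-(2 * |D| + 2))
  rw [norm_of_nonneg (by simp only [dilate, smul_eq_mul]; positivity)]
  exact dilate_jap_mul_norm_le hR hN hx hS z

lemma dilateConv_jap_norm_le (hR : 1 ≤ R) (hN : 1 ≤ N) (hx : |x| ≤ R)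
    (hφ : AEStronglyMeasurable φ) (hint : Integrable fun z => jap z ^ (-D) * ‖φ z‖)
    (hS : ∀ z ∈ Icc (-(2 * R)) (2 * R), ‖φ z‖ ≤ S) :
    dilateConv (jap · ^ (-(2 * |D| + 2))) N (‖φ ·‖) x ≤
      π * S + 4 ^ |D| * N⁻¹ * (R * N) ^ (-D) * wL1 D φ := by
  have hN0 : 0 < N := by linarith
  have hnear := (integrable_dilate_sub_left integrable_inv_one_add_sq hN0.ne' x).const_mul S
  have hfar := hint.const_mul (4 ^ |D| * N⁻¹ * (R * N) ^ (-D))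
  refine (integral_mono (integrable_dilate_jap_mul_norm hR hN hx hφ hint hS) (hnear.add hfar)
    (dilate_jap_mul_norm_le hR hN hx hS)).trans_eq ?_
  rw [integral_add' hnear hfar, integral_const_mul, integral_const_mul,
    integral_dilate_sub_left _ hN0, integral_univ_inv_one_add_sq, mul_comm S, wL1]

lemma wL1_nonneg (D : ℝ) (φ : ℝ → ℂ) : 0 ≤ wL1 D φ :=
  integral_nonneg fun z => mul_nonneg (rpow_nonneg (jap_pos z).le _) (norm_nonneg _)

lemma rpow_mul_dilateConv_jap_norm_le {α : ℝ} (hα1 : α ≤ 1) (hR : 1 ≤ R) (hN : 1 ≤ N)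
    (hx : |x| ≤ R) (hφ : AEStronglyMeasurable φ)
    (hint : Integrable fun z => jap z ^ (-D) * ‖φ z‖)
    (hS : ∀ z ∈ Icc (-(2 * R)) (2 * R), ‖φ z‖ ≤ S) :
    N ^ α * dilateConv (jap · ^ (-(2 * |D| + 2))) N (‖φ ·‖) x ≤
      (π + 4 ^ |D|) * (N ^ α * S + (R * N) ^ (-D) * wL1 D φ) := by
  have hN0 : 0 < N := by linarith
  have hS0 : 0 ≤ S := (norm_nonneg _).trans (hS 0 ⟨by linarith, by linarith⟩)
  set W := (R * N) ^ (-D) * wL1 D φ with hW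
  have hW0 : 0 ≤ W := mul_nonneg (by positivity) (wL1_nonneg D φ)
  have hNα : N ^ α * N⁻¹ ≤ 1 := by
    rw [← div_eq_mul_inv, div_le_one hN0]
    simpa using rpow_le_rpow_of_exponent_le hN hα1
  have hcross : 0 ≤ 4 ^ |D| * (N ^ α * S) + π * W := by positivity
  calc N ^ α * dilateConv (jap · ^ (-(2 * |D| + 2))) N (‖φ ·‖) x
      ≤ N ^ α * (π * S + 4 ^ |D| * N⁻¹ * (R * N) ^ (-D) * wL1 D φ) := by
        gcongr
        exact dilateConv_jap_norm_le hR hN hx hφ hint hS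
    _ = π * (N ^ α * S) + 4 ^ |D| * ((N ^ α * N⁻¹) * W) := by rw [hW]; ring
    _ ≤ π * (N ^ α * S) + 4 ^ |D| * (1 * W) := by gcongr
    _ ≤ (π + 4 ^ |D|) * (N ^ α * S + W) := by linarith

end Majorant

section Norms

variable {I : Set ℝ} {φ : ℝ → ℂ}

lemma norm_le_toReal_supNormE (h : supNormE I φ ≠ ⊤) {x : ℝ} (hx : x ∈ I) :
    ‖φ x‖ ≤ (supNormE I φ).toReal := by
  simpa using ENNReal.toReal_mono h (le_iSup₂ (f := fun z (_ : z ∈ I) => (‖φ z‖₊ : ℝ≥0∞)) x hx)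

lemma supNormE_le_ofReal {A : ℝ} (h : ∀ x ∈ I, ‖φ x‖ ≤ A) :
    supNormE I φ ≤ ENNReal.ofReal A :=
  iSup₂_le fun x hx => by
    rw [← enorm_eq_nnnorm, ← ofReal_norm]
    exact ENNReal.ofReal_le_ofReal (h x hx)

lemma holderSemiE_le_ofReal {α B : ℝ} (h : ∀ x ∈ I, ∀ y ∈ I, ‖φ x - φ y‖ ≤ B * |x - y| ^ α) :
    holderSemiE α I φ ≤ ENNReal.ofReal B :=
  iSup₂_le fun x hx => iSup₂_le fun y hy => iSup₂_le fun hxy _ => by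
    refine ENNReal.ofReal_le_ofReal ?_
    rw [div_le_iff₀ (rpow_pos_of_pos (abs_pos.2 (sub_ne_zero.2 hxy)) α)]
    exact h x hx y hy

lemma holderNormE_le_ofReal_add {α A B : ℝ} (hsup : ∀ x ∈ I, ‖φ x‖ ≤ A)
    (hsemi : ∀ x ∈ I, ∀ y ∈ I, ‖φ x - φ y‖ ≤ B * |x - y| ^ α) :
    holderNormE α I φ ≤ ENNReal.ofReal A + ENNReal.ofReal B := by
  unfold holderNormE
  split_ifs
  · exact (supNormE_le_ofReal hsup).trans le_self_add
  · exact add_le_add (supNormE_le_ofReal hsup) (holderSemiE_le_ofReal hsemi)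

end Norms

lemma holderNormE_dilateConv_le {K φ : ℝ → ℂ} {w : ℝ → ℝ} {I : Set ℝ} {α N A B H : ℝ}
    (hα0 : 0 ≤ α) (hN : 1 ≤ N) (hK : Continuous K) (hφ : AEStronglyMeasurable φ) (hB : 0 ≤ B)
    (hH : 0 ≤ H) (hw : ∀ u, 0 ≤ w u) (hb : ∀ u, ‖K u‖ ≤ B * w u)
    (hb' : ∀ u v, ‖K u - K v‖ ≤ H * |u - v| ^ α * (w u + w v))
    (hint : ∀ x ∈ I, Integrable fun z => dilate N w (x - z) * ‖φ z‖)
    (hA : ∀ x ∈ I, N ^ α * dilateConv w N (‖φ ·‖) x ≤ A) :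
    holderNormE α I (dilateConv K N φ) ≤ ENNReal.ofReal (B * A) + ENNReal.ofReal (2 * H * A) := by
  have hN0 : 0 ≤ N := by linarith
  refine holderNormE_le_ofReal_add (fun x hx => ?_) fun x hx y hy => ?_
  · have havg : dilateConv w N (‖φ ·‖) x ≤ A :=
      (le_mul_of_one_le_left (dilateConv_nonneg hN0 hw (fun _ => norm_nonneg _) x)
        (one_le_rpow hN hα0)).trans (hA x hx)
    exact (norm_dilateConv_le hN0 hb (hint x hx)).trans (mul_le_mul_of_nonneg_left havg hB)
  · have havg := mul_le_mul_of_nonneg_left (add_le_add (hA x hx) (hA y hy))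
      (by positivity : 0 ≤ H * |x - y| ^ α)
    refine (norm_dilateConv_sub_le hN0 hK hφ hb hb' (hint x hx) (hint y hy)).trans ?_
    linarith

lemma holderNormE_dilateConv_Icc_le {K φ : ℝ → ℂ} {α D R N S B : ℝ} (hα0 : 0 ≤ α) (hα1 : α ≤ 1)
    (hR : 1 ≤ R) (hN : 1 ≤ N) (hK : Differentiable ℝ K)
    (hb : ∀ u, ‖K u‖ ≤ B * jap u ^ (-(2 * |D| + 2)))
    (hb' : ∀ u, ‖deriv K u‖ ≤ B * jap u ^ (-(2 * |D| + 2)))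
    (hφ : AEStronglyMeasurable φ) (hint : Integrable fun z => jap z ^ (-D) * ‖φ z‖)
    (hS : ∀ z ∈ Icc (-(2 * R)) (2 * R), ‖φ z‖ ≤ S) :
    holderNormE α (Icc (-R) R) (dilateConv K N φ) ≤
      ENNReal.ofReal ((1 + 2 * 2 ^ (2 * |D| + 2)) * B * (π + 4 ^ |D|) *
        (N ^ α * S + (R * N) ^ (-D) * wL1 D φ)) := by
  have hB : 0 ≤ B := nonneg_of_mul_nonneg_left ((norm_nonneg _).trans (hb 0))
    (rpow_pos_of_pos (jap_pos 0) _)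
  have hS0 : 0 ≤ S := (norm_nonneg _).trans (hS 0 ⟨by linarith, by linarith⟩)
  have hwL1 := wL1_nonneg D φ
  refine (holderNormE_dilateConv_le hα0 hN hK.continuous hφ hB (by positivity)
    (fun u => rpow_nonneg (jap_pos u).le _) hb
    (norm_sub_le_abs_sub_rpow_mul_jap hK (by positivity) hb hb' hα0 hα1)
    (fun x hx => integrable_dilate_jap_mul_norm hR hN (abs_le.2 hx) hφ hint hS)
    (fun x hx => rpow_mul_dilateConv_jap_norm_le hα1 hR hN (abs_le.2 hx) hφ hint hS)).trans_eq ?_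
  rw [← ENNReal.ofReal_add (by positivity) (by positivity)]
  congr 1
  ring

theorem PLE_holder_bound_general (ρ : 𝓢(ℝ, ℝ)) {α : ℝ} (hα0 : 0 ≤ α) (hα1 : α ≤ 1) (D : ℝ) :
    ∃ C : ℝ, 0 < C ∧
      ∀ R N : ℝ, 1 ≤ R → 1 ≤ N →
        ∀ φ : ℝ → ℂ, AEStronglyMeasurable φ → Integrable (fun x => jap x ^ (-D) * ‖φ x‖) →
          holderNormE α (Icc (-R) R) (PLE ρ N φ) ≤
            ENNReal.ofReal C *
              (ENNReal.ofReal (N ^ α) * supNormE (Icc (-(2 * R)) (2 * R)) φ +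
                ENNReal.ofReal ((R * N) ^ (-D)) * ENNReal.ofReal (wL1 D φ)) := by
  obtain ⟨K, hK⟩ := exists_schwartzMap_eq_invFourier ρ
  obtain ⟨B, hB, hb, hb'⟩ :=
    exists_norm_schwartzMap_and_deriv_le_jap_rpow_neg K (2 * |D| + 2)
  have hC : 0 < (1 + 2 * 2 ^ (2 * |D| + 2)) * B * (π + 4 ^ |D|) := by positivity
  refine ⟨_, hC, fun R N hR hN φ hφ hint => ?_⟩
  have hNα : 0 < N ^ α := by positivity
  rcases eq_or_ne (supNormE (Icc (-(2 * R)) (2 * R)) φ) ⊤ with htop | htop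
  · simp [htop, hC, hNα]
  rw [PLE_eq_dilateConv ρ (by linarith) φ, ← hK]
  refine (holderNormE_dilateConv_Icc_le hα0 hα1 hR hN K.differentiable hb hb' hφ hint
    fun z hz => norm_le_toReal_supNormE htop hz).trans_eq ?_
  have hw := wL1_nonneg D φ
  rw [ENNReal.ofReal_mul hC.le, ENNReal.ofReal_add (by positivity) (by positivity),
    ENNReal.ofReal_mul hNα.le, ENNReal.ofReal_mul (p := (R * N) ^ (-D)) (by positivity),
    ENNReal.ofReal_toReal htop]

lemma IsLPBump.hasCompactSupport {ρ : ℝ → ℝ} (hρ : IsLPBump ρ) : HasCompactSupport ρ :=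
  .intro isCompact_Icc hρ.2.2.2

/-- **Hölder bound for low-frequency projections** (Lemma 2.2, estimate (2.4)). -/
theorem PLE_holder_bound (ρ : ℝ → ℝ) (hρ : IsLPBump ρ) (α : ℝ) (hα0 : 0 ≤ α) (hα1 : α < 1)
    (D : ℝ) (hD : 1 ≤ D) :
    ∃ C : ℝ, 0 < C ∧
      ∀ R N : ℝ, 10 ≤ R → (∃ k : ℕ, N = 2 ^ k) →
        ∀ φ : ℝ → ℂ, Measurable φ → Integrable (fun x => jap x ^ (-D) * ‖φ x‖) →
          holderNormE α (Set.Icc (-R) R) (PLE ρ N φ) ≤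
            ENNReal.ofReal C *
              (ENNReal.ofReal (N ^ α) * supNormE (Set.Icc (-(2 * R)) (2 * R)) φ +
                ENNReal.ofReal ((R * N) ^ (-D)) * ENNReal.ofReal (wL1 D φ)) := by
  obtain ⟨C, hC, h⟩ := PLE_holder_bound_general
    (hρ.hasCompactSupport.toSchwartzMap hρ.1) hα0 hα1.le D
  exact ⟨C, hC, fun R N hR ⟨_, hN⟩ φ hφ => h R N (by linarith)
    (hN ▸ one_le_pow₀ one_le_two) φ hφ.aestronglyMeasurable⟩
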